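/- arXiv:1607.07397 — 2 statements merged into one kernel-verified Lean document; each statement's English description precedes it below -/
import Mathlib

section
/- Let f and q be functions meromorphic on all of ℂ such that the functions s ↦ f(1/s) and s ↦ q(1/s) are meromorphic at 0, let m ∈ ℂ be such that q(1/s)/s → −m as s → 0 (s ≠ 0), and suppose f'(t) + f(t)² + f(t)·q(t) = 0 holds for all t outside some finite subset of ℂ. Then f(1/s) → 0 as s → 0, and the limit a := lim_{s→0} f(1/s)/s exists and satisfies a = 0 or a = m + 1. -/
open Filter Topology

/-!
In the coordinate `s = 1/t` at infinity put `F s = f (1/s)`. The Euler operator satisfies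
`t d/dt = -s d/ds`, so dividing `f' + f² + f q = 0` by `f` and multiplying by `t` gives
`F s / s = s F' s / F s - q (1/s) / s`. The first term on the right tends to the order `n` of `F`
at `0`, hence `F s / s → n + m`. A nonzero limit of `F s / s` forces `n = 1`.
-/

section

variable {𝕜 : Type*} [NontriviallyNormedField 𝕜]

theorem meromorphicOrderAt_eq_one_of_tendsto_div_sub {F : 𝕜 → 𝕜} {x c : 𝕜}
    (hF : MeromorphicAt F x) (hc : c ≠ 0)
    (h : Tendsto (fun z ↦ F z / (z - x)) (𝓝[≠] x) (𝓝 c)) :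
    meromorphicOrderAt F x = 1 := by
  have hquot : MeromorphicAt (fun z ↦ F z / (z - x)) x := by fun_prop
  have hquot_order : meromorphicOrderAt (fun z ↦ F z / (z - x)) x = 0 :=
    (tendsto_ne_zero_iff_meromorphicOrderAt_eq_zero hquot).1 ⟨c, hc, h⟩
  have hmul : F =ᶠ[𝓝[≠] x] fun z ↦ F z / (z - x) * (z - x) := by
    filter_upwards [self_mem_nhdsWithin] with z hz
    rw [div_mul_cancel₀ _ (sub_ne_zero.2 hz)]
  rw [meromorphicOrderAt_congr hmul, fun_meromorphicOrderAt_mul hquot (by fun_prop),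
    hquot_order, zero_add]
  exact meromorphicOrderAt_id_sub_const

theorem logDeriv_sub_zpow_mul {g : 𝕜 → 𝕜} {x z : 𝕜} (n : ℤ) (hz : z ≠ x) (hgz : g z ≠ 0)
    (hg : DifferentiableAt 𝕜 g z) :
    logDeriv (fun w ↦ (w - x) ^ n * g w) z = n / (z - x) + logDeriv g z := by
  have hzx : z - x ≠ 0 := sub_ne_zero.2 hz
  have hpow : DifferentiableAt 𝕜 (fun w ↦ (w - x) ^ n) z :=
    (differentiableAt_id.sub_const x).zpow (.inl hzx)
  rw [logDeriv_mul (f := fun w ↦ (w - x) ^ n) z (zpow_ne_zero n hzx) hgz hpow hg,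
    logDeriv_fun_zpow (by fun_prop)]
  simp [logDeriv_apply, div_eq_mul_inv]

theorem tendsto_sub_mul_logDeriv [CompleteSpace 𝕜] {F : 𝕜 → 𝕜} {x : 𝕜}
    (hF : MeromorphicAt F x) (hord : meromorphicOrderAt F x ≠ ⊤) :
    Tendsto (fun z ↦ (z - x) * logDeriv F z) (𝓝[≠] x)
      (𝓝 ((meromorphicOrderAt F x).untop₀ : 𝕜)) := by
  obtain ⟨g, hg, hgx, hFg⟩ := (meromorphicOrderAt_ne_top_iff hF).1 hord
  set n := (meromorphicOrderAt F x).untop₀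
  have hlim : Tendsto (fun z ↦ n + (z - x) * logDeriv g z) (𝓝[≠] x) (𝓝 (n : 𝕜)) := by
    have hcont : ContinuousAt (fun z ↦ (n : 𝕜) + (z - x) * logDeriv g z) x :=
      continuousAt_const.add
        ((continuousAt_id.sub continuousAt_const).mul
          (hg.deriv.continuousAt.div hg.continuousAt hgx))
    simpa using hcont.tendsto.mono_left nhdsWithin_le_nhds
  refine hlim.congr' ?_
  filter_upwards [self_mem_nhdsWithin, logDeriv_congr_nhdsNE hFg,
    nhdsWithin_le_nhds hg.eventually_analyticAt,
    nhdsWithin_le_nhds (hg.continuousAt.eventually_ne hgx)] with z hz hlog hgz hgz_ne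
  simp only [smul_eq_mul] at hlog
  rw [hlog, logDeriv_sub_zpow_mul n hz hgz_ne hgz.differentiableAt, mul_add,
    mul_div_cancel₀ _ (sub_ne_zero.2 hz)]

-- At `s = 0`, and where `f` is not differentiable at `s⁻¹`, both sides take the junk value `0`.
theorem mul_logDeriv_comp_inv (f : 𝕜 → 𝕜) (s : 𝕜) :
    s * logDeriv (fun z ↦ f z⁻¹) s = -(s⁻¹ * logDeriv f s⁻¹) := by
  rcases eq_or_ne s 0 with rfl | hs
  · simp only [zero_mul, inv_zero, neg_zero]
  by_cases hf : DifferentiableAt 𝕜 f s⁻¹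
  · have hcomp := logDeriv_comp hf (differentiableAt_inv hs)
    rw [deriv_inv] at hcomp
    rw [← Function.comp_def f, hcomp]
    field_simp
  · have hF : ¬ DifferentiableAt 𝕜 (fun z ↦ f z⁻¹) s := by
      contrapose! hf
      have hF' : DifferentiableAt 𝕜 (fun z ↦ f z⁻¹) s⁻¹⁻¹ := by rwa [inv_inv]
      simpa [Function.comp_def] using hF'.comp s⁻¹ (differentiableAt_inv (inv_ne_zero hs))
    simp [logDeriv_eq_zero_of_not_differentiableAt, hf, hF]

theorem logDeriv_eq_of_riccati {f q : 𝕜 → 𝕜} {t : 𝕜} (hft : f t ≠ 0)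
    (hRic : deriv f t + f t ^ 2 + f t * q t = 0) :
    logDeriv f t = -(f t + q t) := by
  rw [logDeriv_apply, div_eq_iff hft]
  linear_combination hRic

theorem div_eq_mul_logDeriv_comp_inv_sub_of_riccati {f q : 𝕜 → 𝕜} {s : 𝕜} (hfs : f s⁻¹ ≠ 0)
    (hRic : deriv f s⁻¹ + f s⁻¹ ^ 2 + f s⁻¹ * q s⁻¹ = 0) :
    f s⁻¹ / s = s * logDeriv (fun z ↦ f z⁻¹) s - q s⁻¹ / s := by
  rw [mul_logDeriv_comp_inv, logDeriv_eq_of_riccati hfs hRic]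
  ring

theorem tendsto_comp_inv_div_of_riccati [CompleteSpace 𝕜] {f q : 𝕜 → 𝕜} {m : 𝕜}
    (hf : MeromorphicAt (fun s ↦ f s⁻¹) 0)
    (hord : meromorphicOrderAt (fun s ↦ f s⁻¹) 0 ≠ ⊤)
    (hq : Tendsto (fun s ↦ q s⁻¹ / s) (𝓝[≠] 0) (𝓝 (-m)))
    (hRic : ∀ᶠ t in Bornology.cobounded 𝕜, deriv f t + f t ^ 2 + f t * q t = 0) :
    Tendsto (fun s ↦ f s⁻¹ / s) (𝓝[≠] 0)
      (𝓝 ((meromorphicOrderAt (fun s ↦ f s⁻¹) 0).untop₀ + m)) := by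
  have hlim := (tendsto_sub_mul_logDeriv hf hord).sub hq
  simp only [sub_zero, sub_neg_eq_add] at hlim
  refine hlim.congr' ?_
  filter_upwards [(meromorphicOrderAt_ne_top_iff_eventually_ne_zero hf).1 hord,
    tendsto_inv₀_nhdsNE_zero.eventually hRic] with s hfs hRics
  exact (div_eq_mul_logDeriv_comp_inv_sub_of_riccati hfs hRics).symm

theorem exists_tendsto_comp_inv_div_of_riccati [CompleteSpace 𝕜] {f q : 𝕜 → 𝕜} {m : 𝕜}
    (hf : MeromorphicAt (fun s ↦ f s⁻¹) 0)
    (hq : Tendsto (fun s ↦ q s⁻¹ / s) (𝓝[≠] 0) (𝓝 (-m)))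
    (hRic : ∀ᶠ t in Bornology.cobounded 𝕜, deriv f t + f t ^ 2 + f t * q t = 0) :
    ∃ a : 𝕜, Tendsto (fun s ↦ f s⁻¹ / s) (𝓝[≠] 0) (𝓝 a) ∧ (a = 0 ∨ a = m + 1) := by
  by_cases hord : meromorphicOrderAt (fun s ↦ f s⁻¹) 0 = ⊤
  · have hzero : (fun s ↦ f s⁻¹ / s) =ᶠ[𝓝[≠] 0] fun _ ↦ 0 :=
      (meromorphicOrderAt_eq_top_iff.1 hord).mono fun s hs ↦ by simp only [hs, zero_div]
    exact ⟨0, tendsto_const_nhds.congr' hzero.symm, .inl rfl⟩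
  · have hlim := tendsto_comp_inv_div_of_riccati hf hord hq hRic
    refine ⟨_, hlim, or_iff_not_imp_left.2 fun hne ↦ ?_⟩
    have hone : meromorphicOrderAt (fun s ↦ f s⁻¹) 0 = 1 :=
      meromorphicOrderAt_eq_one_of_tendsto_div_sub hf hne (by simpa only [sub_zero] using hlim)
    simp [hone, add_comm]

theorem stmt_4_general [CompleteSpace 𝕜] {f q : 𝕜 → 𝕜} {m : 𝕜}
    (hf : MeromorphicAt (fun s ↦ f s⁻¹) 0)
    (hq : Tendsto (fun s ↦ q s⁻¹ / s) (𝓝[≠] 0) (𝓝 (-m)))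
    (hRic : ∀ᶠ t in Bornology.cobounded 𝕜, deriv f t + f t ^ 2 + f t * q t = 0) :
    Tendsto (fun s ↦ f s⁻¹) (𝓝[≠] 0) (𝓝 0) ∧
      ∃ a : 𝕜, Tendsto (fun s ↦ f s⁻¹ / s) (𝓝[≠] 0) (𝓝 a) ∧ (a = 0 ∨ a = m + 1) := by
  obtain ⟨a, ha, ha_eq⟩ := exists_tendsto_comp_inv_div_of_riccati hf hq hRic
  refine ⟨?_, a, ha, ha_eq⟩
  have hid : Tendsto (fun s : 𝕜 ↦ s) (𝓝[≠] 0) (𝓝 0) := nhdsWithin_le_nhds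
  have hprod : Tendsto (fun s ↦ f s⁻¹ / s * s) (𝓝[≠] 0) (𝓝 0) := by
    simpa only [mul_zero] using ha.mul hid
  refine hprod.congr' ?_
  filter_upwards [self_mem_nhdsWithin] with s hs
  exact div_mul_cancel₀ _ hs

end

/-- behaviour at infinity of a global meromorphic solution of
`f' + f² + f·q = 0`, where `q(t) = −m/t + O(1/t²)` at infinity:
`f(t) → 0` and `f(t) = a/t + O(1/t²)` with `a = 0` or `a = m + 1`. -/
theorem stmt_4 (f q : ℂ → ℂ) (m : ℂ)
    (hf : ∀ z : ℂ, MeromorphicAt f z) (hq : ∀ z : ℂ, MeromorphicAt q z)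
    (hfinf : MeromorphicAt (fun s => f (1 / s)) 0)
    (hqinf : MeromorphicAt (fun s => q (1 / s)) 0)
    (hm : Tendsto (fun s => q (1 / s) / s) (𝓝[≠] (0 : ℂ)) (𝓝 (-m)))
    (hRic : ∃ S : Finset ℂ, ∀ t : ℂ, t ∉ S →
      deriv f t + f t ^ 2 + f t * q t = 0) :
    Tendsto (fun s => f (1 / s)) (𝓝[≠] (0 : ℂ)) (𝓝 0) ∧
    ∃ a : ℂ, Tendsto (fun s => f (1 / s) / s) (𝓝[≠] (0 : ℂ)) (𝓝 a) ∧
      (a = 0 ∨ a = m + 1) := by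
  obtain ⟨S, hS⟩ := hRic
  have hRic_cobounded : ∀ᶠ t in Bornology.cobounded ℂ, deriv f t + f t ^ 2 + f t * q t = 0 :=
    mem_of_superset (Bornology.isBounded_def.1 S.finite_toSet.isBounded) fun t ht ↦ hS t ht
  simp only [one_div] at hfinf hm ⊢
  exact stmt_4_general hfinf hm hRic_cobounded
end

section
/- Let η ∈ ℤ≥0, let r : ℂ → ℂ be analytic at 0, set q(t) := −η/t + r(t), and let ω₀ ∈ ℂ× satisfy ω₀·q(ω₀ t) = q(t) for all t in some punctured neighbourhood of 0. Let f be analytic at 0, not identically zero on any neighbourhood of 0, and satisfy the Riccati equation f'(t) + f(t)² + f(t)·q(t) = 0 on a punctured neighbourhood of 0. Then the equivariance relation ω₀·f(ω₀ t) = f(t) holds for all t in some neighbourhood of 0 if and only if ω₀^{η+1} = 1. -/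
open Filter Topology

/-- The singular coefficient function `q(t) = −η/t + r(t)` of the Riccati equation. -/
noncomputable def riccatiQ (η : ℕ) (r : ℂ → ℂ) (t : ℂ) : ℂ := -(η : ℂ) / t + r t

/-!
The difference `d = f - g` of two solutions of `f' + f² + f q = 0` solves the linear equation
`d' = -(f + g + q) d`, whose coefficient has a simple pole of residue `n` when `q` has residue `-n`.
The residue of a logarithmic derivative is the order of vanishing, so `d` either vanishes
identically or vanishes to order exactly `n`. Hence an analytic solution is determined by its
`n`-th derivative, and that derivative is nonzero unless the solution is zero. Since
`t ↦ ω f(ω t)` is another solution, with `n`-th derivative multiplied by `ω ^ (n + 1)`, it equals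
`f` exactly when `ω ^ (n + 1) = 1`.
-/

section LinearODE

variable {𝕜 : Type*} [NontriviallyNormedField 𝕜] {u a : 𝕜 → 𝕜} {x : 𝕜}

theorem iteratedDeriv_comp_mul_left {F : Type*} [NormedAddCommGroup F] [NormedSpace 𝕜 F]
    (n : ℕ) (f : 𝕜 → F) (c x : 𝕜) :
    iteratedDeriv n (fun t ↦ f (c * t)) x = c ^ n • iteratedDeriv n f (c * x) := by
  induction n generalizing x with
  | zero => simp
  | succ n ih =>
    rw [iteratedDeriv_succ, funext ih, deriv_fun_const_smul_field,
      deriv_comp_mul_left c (iteratedDeriv n f), ← iteratedDeriv_succ, smul_smul, pow_succ]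

variable [CompleteSpace 𝕜]

theorem tendsto_sub_mul_logDeriv_s6 {n : ℤ} (hu : MeromorphicAt u x)
    (hn : meromorphicOrderAt u x = n) :
    Tendsto (fun t ↦ (t - x) * logDeriv u t) (𝓝[≠] x) (𝓝 (n : 𝕜)) := by
  obtain ⟨g, hg, hgx, hug⟩ := (meromorphicOrderAt_eq_int_iff hu).1 hn
  have hlim : Tendsto (fun t ↦ n + (t - x) * logDeriv g t) (𝓝[≠] x) (𝓝 (n : 𝕜)) := by
    have hcont : ContinuousAt (fun t ↦ n + (t - x) * (deriv g t / g t)) x := by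
      have := hg.continuousAt
      have := hg.deriv.continuousAt
      fun_prop (disch := assumption)
    simpa [ContinuousAt, logDeriv_apply] using hcont.tendsto.mono_left nhdsWithin_le_nhds
  refine hlim.congr' ?_
  filter_upwards [logDeriv_congr_nhdsNE hug, self_mem_nhdsWithin,
    (hg.eventually_analyticAt.and (hg.continuousAt.eventually_ne hgx)).filter_mono
      nhdsWithin_le_nhds] with t hlog (ht : t ≠ x) ⟨hgt, hgt0⟩
  have htx : t - x ≠ 0 := sub_ne_zero.2 ht
  have hpow : logDeriv (fun s ↦ (s - x) ^ n) t = n / (t - x) := by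
    rw [logDeriv_fun_zpow (by fun_prop)]
    simp [logDeriv_apply, div_eq_mul_inv]
  simp only [smul_eq_mul] at hlog
  rw [hlog, logDeriv_mul (f := fun s ↦ (s - x) ^ n) t (zpow_ne_zero n htx) hgt0
    (DifferentiableAt.zpow (by fun_prop) (Or.inl htx)) hgt.differentiableAt, hpow]
  field_simp

variable [CharZero 𝕜]

theorem meromorphicOrderAt_eq_of_deriv_eq_mul {n : ℤ} (hu : MeromorphicAt u x)
    (hne : meromorphicOrderAt u x ≠ ⊤) (hode : ∀ᶠ t in 𝓝[≠] x, deriv u t = a t * u t)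
    (ha : Tendsto (fun t ↦ (t - x) * a t) (𝓝[≠] x) (𝓝 (n : 𝕜))) :
    meromorphicOrderAt u x = n := by
  lift meromorphicOrderAt u x to ℤ using hne with m hm
  have hlog : Tendsto (fun t ↦ (t - x) * a t) (𝓝[≠] x) (𝓝 (m : 𝕜)) := by
    refine (tendsto_sub_mul_logDeriv_s6 hu hm.symm).congr' ?_
    filter_upwards [hode, (meromorphicOrderAt_ne_top_iff_eventually_ne_zero hu).1 (by simp [← hm])]
      with t ht hut
    rw [logDeriv_apply, ht, mul_div_cancel_right₀ _ hut]
  exact_mod_cast tendsto_nhds_unique hlog ha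

theorem eventually_eq_zero_iff_iteratedDeriv_eq_zero_of_deriv_eq_mul {n : ℕ} (hu : AnalyticAt 𝕜 u x)
    (hode : ∀ᶠ t in 𝓝[≠] x, deriv u t = a t * u t)
    (ha : Tendsto (fun t ↦ (t - x) * a t) (𝓝[≠] x) (𝓝 (n : 𝕜))) :
    (∀ᶠ t in 𝓝 x, u t = 0) ↔ iteratedDeriv n u x = 0 := by
  constructor
  · intro h
    have hzero : u =ᶠ[𝓝 x] fun _ ↦ 0 := h
    simp [hzero.iteratedDeriv_eq n]
  · contrapose
    intro h
    have hfin : analyticOrderAt u x ≠ ⊤ := mt analyticOrderAt_eq_top.1 h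
    have horder : meromorphicOrderAt u x = (n : ℤ) :=
      meromorphicOrderAt_eq_of_deriv_eq_mul hu.meromorphicAt
        (by simpa [hu.meromorphicOrderAt_eq] using hfin) hode (by simpa using ha)
    have horder' : analyticOrderAt u x = n := by
      lift analyticOrderAt u x to ℕ using hfin with m hm
      rw [hu.meromorphicOrderAt_eq, ← hm] at horder
      simpa using horder
    exact ((analyticOrderAt_eq_nat_iff_iteratedDeriv_eq_zero hu).1 horder').2

end LinearODE

section Riccati

variable {𝕜 : Type*} [NontriviallyNormedField 𝕜] {q f g : 𝕜 → 𝕜} {x ω : 𝕜}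

/-- `f` satisfies the Riccati equation `f' + f² + f q = 0` on a punctured neighbourhood of `x`.
The point `x` is excluded because `q` is allowed a pole there. -/
def IsRiccatiSolutionAt (q f : 𝕜 → 𝕜) (x : 𝕜) : Prop :=
  ∀ᶠ t in 𝓝[≠] x, deriv f t + f t ^ 2 + f t * q t = 0

namespace IsRiccatiSolutionAt

theorem zero (q : 𝕜 → 𝕜) (x : 𝕜) : IsRiccatiSolutionAt q 0 x := by
  simp [IsRiccatiSolutionAt]

theorem mul_comp_mul_left (h : IsRiccatiSolutionAt q f 0) (hω : ω ≠ 0)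
    (hq : ∀ᶠ t in 𝓝[≠] (0 : 𝕜), ω * q (ω * t) = q t) :
    IsRiccatiSolutionAt q (fun t ↦ ω * f (ω * t)) 0 := by
  have hmul : Tendsto (fun t ↦ ω * t) (𝓝[≠] 0) (𝓝[≠] 0) := by
    simpa [Tendsto] using ((Homeomorph.mulLeft₀ ω hω).map_punctured_nhds_eq 0).le
  filter_upwards [hmul.eventually h, hq] with t ht hqt
  rw [deriv_const_mul_field, deriv_comp_mul_left, smul_eq_mul, ← hqt]
  linear_combination ω ^ 2 * ht

theorem deriv_sub_eq_mul (hf : IsRiccatiSolutionAt q f x) (hg : IsRiccatiSolutionAt q g x)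
    (hfd : ∀ᶠ t in 𝓝[≠] x, DifferentiableAt 𝕜 f t)
    (hgd : ∀ᶠ t in 𝓝[≠] x, DifferentiableAt 𝕜 g t) :
    ∀ᶠ t in 𝓝[≠] x, deriv (f - g) t = -(f t + g t + q t) * (f - g) t := by
  filter_upwards [hf, hg, hfd, hgd] with t hft hgt hfdt hgdt
  rw [deriv_sub hfdt hgdt, Pi.sub_apply]
  linear_combination hft - hgt

variable [CompleteSpace 𝕜] [CharZero 𝕜] {n : ℕ}

theorem eventuallyEq_iff_iteratedDeriv_eq (hf : IsRiccatiSolutionAt q f x)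
    (hg : IsRiccatiSolutionAt q g x) (hfa : AnalyticAt 𝕜 f x) (hga : AnalyticAt 𝕜 g x)
    (hq : Tendsto (fun t ↦ (t - x) * q t) (𝓝[≠] x) (𝓝 (-n : 𝕜))) :
    f =ᶠ[𝓝 x] g ↔ iteratedDeriv n f x = iteratedDeriv n g x := by
  have hode := hf.deriv_sub_eq_mul hg
    (hfa.eventually_analyticAt.mono (fun _ h ↦ h.differentiableAt) |>.filter_mono
      nhdsWithin_le_nhds)
    (hga.eventually_analyticAt.mono (fun _ h ↦ h.differentiableAt) |>.filter_mono
      nhdsWithin_le_nhds)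
  have hregular : Tendsto (fun t ↦ (t - x) * (f t + g t)) (𝓝[≠] x) (𝓝 0) := by
    have hcont : ContinuousAt (fun t ↦ (t - x) * (f t + g t)) x := by
      have := hfa.continuousAt
      have := hga.continuousAt
      fun_prop
    simpa [ContinuousAt] using hcont.tendsto.mono_left nhdsWithin_le_nhds
  have hresidue : Tendsto (fun t ↦ (t - x) * -(f t + g t + q t)) (𝓝[≠] x) (𝓝 (n : 𝕜)) := by
    convert (hregular.add hq).neg using 2 <;> ring
  have hzero :=
    eventually_eq_zero_iff_iteratedDeriv_eq_zero_of_deriv_eq_mul (hfa.sub hga) hode hresidue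
  rw [iteratedDeriv_sub hfa.contDiffAt hga.contDiffAt, sub_eq_zero] at hzero
  simpa only [EventuallyEq, Pi.sub_apply, sub_eq_zero] using hzero

end IsRiccatiSolutionAt

theorem stmt_6_general [CompleteSpace 𝕜] [CharZero 𝕜] {n : ℕ} (hω : ω ≠ 0)
    (hres : Tendsto (fun t ↦ t * q t) (𝓝[≠] 0) (𝓝 (-n : 𝕜)))
    (hq : ∀ᶠ t in 𝓝[≠] (0 : 𝕜), ω * q (ω * t) = q t)
    (hf : AnalyticAt 𝕜 f 0) (hfne : ¬ ∀ᶠ t in 𝓝 (0 : 𝕜), f t = 0)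
    (hRic : IsRiccatiSolutionAt q f 0) :
    (∀ᶠ t in 𝓝 (0 : 𝕜), ω * f (ω * t) = f t) ↔ ω ^ (n + 1) = 1 := by
  replace hres : Tendsto (fun t ↦ (t - 0) * q t) (𝓝[≠] 0) (𝓝 (-n : 𝕜)) := by simpa using hres
  have hlead : iteratedDeriv n f 0 ≠ 0 := fun h ↦
    hfne ((hRic.eventuallyEq_iff_iteratedDeriv_eq (.zero q 0) hf analyticAt_const hres).2
      (by simpa using h))
  have hscaled : AnalyticAt 𝕜 (fun t ↦ ω * f (ω * t)) 0 :=
    analyticAt_const.mul (AnalyticAt.fun_comp (f := fun t ↦ ω * t) (by simpa using hf)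
      (by fun_prop))
  calc (∀ᶠ t in 𝓝 (0 : 𝕜), ω * f (ω * t) = f t)
      ↔ iteratedDeriv n (fun t ↦ ω * f (ω * t)) 0 = iteratedDeriv n f 0 :=
        (hRic.mul_comp_mul_left hω hq).eventuallyEq_iff_iteratedDeriv_eq hRic hscaled hf hres
    _ ↔ ω ^ (n + 1) * iteratedDeriv n f 0 = iteratedDeriv n f 0 := by
        rw [iteratedDeriv_const_mul_field, iteratedDeriv_comp_mul_left, mul_zero, smul_eq_mul,
          pow_succ', mul_assoc]
    _ ↔ ω ^ (n + 1) = 1 := mul_eq_right₀ hlead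

end Riccati

theorem tendsto_mul_riccatiQ (η : ℕ) {r : ℂ → ℂ} (hr : ContinuousAt r 0) :
    Tendsto (fun t ↦ t * riccatiQ η r t) (𝓝[≠] 0) (𝓝 (-η : ℂ)) := by
  have hcont : ContinuousAt (fun t ↦ -(η : ℂ) + t * r t) 0 := by fun_prop
  have hlim : Tendsto (fun t ↦ -(η : ℂ) + t * r t) (𝓝[≠] 0) (𝓝 (-η : ℂ)) := by
    simpa [ContinuousAt] using hcont.tendsto.mono_left nhdsWithin_le_nhds
  refine hlim.congr' ?_
  filter_upwards [self_mem_nhdsWithin] with t (ht : t ≠ 0)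
  rw [riccatiQ]
  field_simp

/-- for an analytic, not identically zero, solution `f` of the Riccati
equation with `ω₀`-equivariant coefficient `q`, the equivariance
`ω₀·f(ω₀t) = f(t)` holds iff `ω₀^(η+1) = 1`. -/
theorem stmt_6 (η : ℕ) (r f : ℂ → ℂ) (ω₀ : ℂ) (hω₀ : ω₀ ≠ 0)
    (hr : AnalyticAt ℂ r 0)
    (hq : ∀ᶠ t in 𝓝[≠] (0 : ℂ), ω₀ * riccatiQ η r (ω₀ * t) = riccatiQ η r t)
    (hf : AnalyticAt ℂ f 0)
    (hfne : ¬ ∀ᶠ t in 𝓝 (0 : ℂ), f t = 0)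
    (hRic : ∀ᶠ t in 𝓝[≠] (0 : ℂ),
      deriv f t + f t ^ 2 + f t * riccatiQ η r t = 0) :
    (∀ᶠ t in 𝓝 (0 : ℂ), ω₀ * f (ω₀ * t) = f t) ↔ ω₀ ^ (η + 1) = 1 :=
  stmt_6_general hω₀ (tendsto_mul_riccatiQ η hr.continuousAt) hq hf hfne hRic
end
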